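/- arXiv:1207.2010 — 4 statements merged into one kernel-verified Lean document; each statement's English description precedes it below -/
import Mathlib

section
/- Continuity of the planner's solution functions (used as Proposition 2.1 of Dana (1993)): the functions x^i : [0,T] × (0,∞) → (0,∞), i = 1,…,I, and μ : [0,T] × (0,∞) → (0,∞), defined by letting (x^1(t,x),…,x^I(t,x)) be the unique maximizer of the pointwise social planner problem at (t,x) and μ(t,x) the associated Lagrange multiplier satisfying λ^i ∂u^i/∂c(t, x^i(t,x)) = μ(t,x) for all i and Σ_{i=1}^I x^i(t,x) = x, are continuous on [0,T] × (0,∞). -/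
open Set
open Filter Topology

/-!
Marginal utilities of a jointly continuous family of concave utilities are jointly continuous,
because a derivative is squeezed between secant slopes to its right and to its left and slopes are
jointly continuous. If `b` is below the multiplier at `q₀`, then slightly enlarging every optimal
share keeps all weighted marginal utilities above `b` there, hence also at nearby `q`; since the
enlarged shares sum to more than the endowment at `q`, some agent gets less than her enlarged share
at `q`, so the multiplier at `q` exceeds `b`. Reversing both orders gives the bound from above.
Each share is then continuous because it inverts a strictly decreasing weighted marginal utility at
the multiplier.
-/

section ConcaveFamily

theorem strictConcaveOn_of_hasDerivAt2_neg {D : Set ℝ} {f f' f'' : ℝ → ℝ} (hD : Convex ℝ D)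
    (hDo : IsOpen D) (hf' : ∀ c ∈ D, HasDerivAt f (f' c) c)
    (hf'' : ∀ c ∈ D, HasDerivAt f' (f'' c) c) (hf''_neg : ∀ c ∈ D, f'' c < 0) :
    StrictConcaveOn ℝ D f := by
  refine strictConcaveOn_of_deriv2_neg' hD (HasDerivAt.continuousOn hf') fun c hc => ?_
  have hderiv : deriv f =ᶠ[𝓝 c] f' := by
    filter_upwards [hDo.mem_nhds hc] with d hd using (hf' d hd).deriv
  have hderiv2 : deriv^[2] f c = f'' c := hderiv.deriv_eq.trans (hf'' c hc).deriv
  exact hderiv2.trans_lt (hf''_neg c hc)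

theorem strictAntiOn_of_strictConcaveOn_of_hasDerivAt {D : Set ℝ} {f f' : ℝ → ℝ}
    (hf : StrictConcaveOn ℝ D f) (hf' : ∀ c ∈ D, HasDerivAt f (f' c) c) : StrictAntiOn f' D :=
  fun c hc d hd hcd => (hf.lt_slope_of_hasDerivAt hc hd hcd (hf' d hd)).trans
    (hf.slope_lt_of_hasDerivAt hc hd hcd (hf' c hc))

variable {Θ : Type*} [TopologicalSpace Θ] {S : Set Θ} {D : Set ℝ} {f f' : Θ → ℝ → ℝ}

theorem continuousWithinAt_slope_of_continuousOn
    (hf : ContinuousOn (fun p : Θ × ℝ => f p.1 p.2) (S ×ˢ D)) {p : Θ × ℝ} (hp : p ∈ S ×ˢ D)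
    {d : ℝ} (hd : d ∈ D) (hpd : p.2 ≠ d) :
    ContinuousWithinAt (fun q : Θ × ℝ => slope (f q.1) q.2 d) (S ×ˢ D) p := by
  have hfd : ContinuousOn (fun q : Θ × ℝ => f q.1 d) (S ×ˢ D) :=
    hf.comp (f := fun q : Θ × ℝ => (q.1, d)) (by fun_prop) fun q hq => ⟨hq.1, hd⟩
  have hinv : ContinuousWithinAt (fun q : Θ × ℝ => (d - q.2)⁻¹) (S ×ˢ D) p :=
    ContinuousWithinAt.inv₀ (by fun_prop) (sub_ne_zero.2 hpd.symm)
  exact hinv.smul ((hfd p hp).sub (hf p hp))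

theorem lowerSemicontinuousOn_deriv_of_concaveOn (hD : IsOpen D)
    (hf : ContinuousOn (fun p : Θ × ℝ => f p.1 p.2) (S ×ˢ D))
    (hconc : ∀ t ∈ S, ConcaveOn ℝ D (f t)) (hf' : ∀ t ∈ S, ∀ c ∈ D, HasDerivAt (f t) (f' t c) c) :
    LowerSemicontinuousOn (fun p : Θ × ℝ => f' p.1 p.2) (S ×ˢ D) := by
  intro p hp b hb
  obtain ⟨d, ⟨hbd, hd⟩, hpd⟩ : ∃ d, (b < slope (f p.1) p.2 d ∧ d ∈ D) ∧ p.2 < d := by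
    have hslope := (hf' p.1 hp.1 p.2 hp.2).tendsto_slope.mono_left (nhdsGT_le_nhdsNE p.2)
    exact (((hslope.eventually_const_lt hb).and
      (mem_nhdsWithin_of_mem_nhds (hD.mem_nhds hp.2))).and self_mem_nhdsWithin).exists
  have hslope := continuousWithinAt_slope_of_continuousOn hf hp hd hpd.ne
  filter_upwards [hslope.eventually_const_lt hbd,
    continuousWithinAt_snd.eventually_lt_const hpd, self_mem_nhdsWithin] with q hbq hqd hq
  exact hbq.trans_le ((hconc q.1 hq.1).slope_le_of_hasDerivAt hq.2 hd hqd (hf' q.1 hq.1 q.2 hq.2))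

theorem upperSemicontinuousOn_deriv_of_concaveOn (hD : IsOpen D)
    (hf : ContinuousOn (fun p : Θ × ℝ => f p.1 p.2) (S ×ˢ D))
    (hconc : ∀ t ∈ S, ConcaveOn ℝ D (f t)) (hf' : ∀ t ∈ S, ∀ c ∈ D, HasDerivAt (f t) (f' t c) c) :
    UpperSemicontinuousOn (fun p : Θ × ℝ => f' p.1 p.2) (S ×ˢ D) := by
  intro p hp b hb
  obtain ⟨d, ⟨hdb, hd⟩, hdp⟩ : ∃ d, (slope (f p.1) p.2 d < b ∧ d ∈ D) ∧ d < p.2 := by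
    have hslope := (hf' p.1 hp.1 p.2 hp.2).tendsto_slope.mono_left (nhdsLT_le_nhdsNE p.2)
    exact (((hslope.eventually_lt_const hb).and
      (mem_nhdsWithin_of_mem_nhds (hD.mem_nhds hp.2))).and self_mem_nhdsWithin).exists
  have hslope := continuousWithinAt_slope_of_continuousOn hf hp hd hdp.ne'
  filter_upwards [hslope.eventually_lt_const hdb,
    continuousWithinAt_snd.eventually_const_lt hdp, self_mem_nhdsWithin] with q hqb hdq hq
  rw [slope_comm] at hqb
  exact ((hconc q.1 hq.1).le_slope_of_hasDerivAt hd hq.2 hdq (hf' q.1 hq.1 q.2 hq.2)).trans_lt hqb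

theorem continuousOn_deriv_of_concaveOn (hD : IsOpen D)
    (hf : ContinuousOn (fun p : Θ × ℝ => f p.1 p.2) (S ×ˢ D))
    (hconc : ∀ t ∈ S, ConcaveOn ℝ D (f t)) (hf' : ∀ t ∈ S, ∀ c ∈ D, HasDerivAt (f t) (f' t c) c) :
    ContinuousOn (fun p : Θ × ℝ => f' p.1 p.2) (S ×ˢ D) :=
  continuousOn_iff_lower_upperSemicontinuousOn.2
    ⟨lowerSemicontinuousOn_deriv_of_concaveOn hD hf hconc hf',
      upperSemicontinuousOn_deriv_of_concaveOn hD hf hconc hf'⟩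

end ConcaveFamily

section Inverse

variable {Q α β : Type*} [TopologicalSpace Q] [LinearOrder α] [TopologicalSpace α]
  [OrderTopology α] [DenselyOrdered α] [LinearOrder β] [TopologicalSpace β] [OrderTopology β]
  {W : Set Q} {D : Set α} {g : Q → α → β} {x : Q → α}

theorem lowerSemicontinuousOn_of_strictAntiOn [NoMinOrder α] (hD : IsOpen D)
    (hg : ∀ d ∈ D, ContinuousOn (fun q => g q d) W) (hanti : ∀ q ∈ W, StrictAntiOn (g q) D)
    (hx : ∀ q ∈ W, x q ∈ D) (hgx : ContinuousOn (fun q => g q (x q)) W) :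
    LowerSemicontinuousOn x W := by
  intro q hq b hb
  obtain ⟨d, ⟨hbd, hd⟩, hdx⟩ : ∃ d, (b < d ∧ d ∈ D) ∧ d < x q :=
    (((eventually_gt_nhds hb).and (hD.mem_nhds (hx q hq))).filter_mono nhdsWithin_le_nhds
      |>.and self_mem_nhdsWithin).exists (f := 𝓝[<] x q)
  have hlt : g q (x q) < g q d := hanti q hq hd (hx q hq) hdx
  filter_upwards [(hgx q hq).eventually_lt (hg d hd q hq) hlt, self_mem_nhdsWithin] with r hlt hr
  exact hbd.trans (((hanti r hr).lt_iff_gt (hx r hr) hd).1 hlt)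

theorem continuousOn_of_strictAntiOn [NoMinOrder α] [NoMaxOrder α] (hD : IsOpen D)
    (hg : ∀ d ∈ D, ContinuousOn (fun q => g q d) W) (hanti : ∀ q ∈ W, StrictAntiOn (g q) D)
    (hx : ∀ q ∈ W, x q ∈ D) (hgx : ContinuousOn (fun q => g q (x q)) W) :
    ContinuousOn x W :=
  continuousOn_iff_lower_upperSemicontinuousOn.2
    ⟨lowerSemicontinuousOn_of_strictAntiOn hD hg hanti hx hgx,
      lowerSemicontinuousOn_of_strictAntiOn (α := αᵒᵈ) (β := βᵒᵈ) hD hg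
        (fun q hq => (hanti q hq).dual) hx hgx⟩

end Inverse

/-- The first-order conditions of a sharing problem: the shares `x i` lie in `D` and all marginal
values `g i (x i)` equal the multiplier `m`. The resource constraint on `∑ i, x i` is kept separate,
so that the notion is invariant under reversing the orders of `α` and `β`. -/
structure EqualizesMarginals {ι α β : Type*} (D : Set α) (g : ι → α → β) (x : ι → α) (m : β) :
    Prop where
  mem : ∀ i, x i ∈ D
  apply_eq : ∀ i, g i (x i) = m

namespace EqualizesMarginals

section Pointwise

variable {ι α β : Type*} [Fintype ι] [AddCommMonoid α] [LinearOrder α] [IsOrderedAddMonoid α]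
  [Preorder β] {D : Set α} {g : ι → α → β} {x y : ι → α} {m b : β}

theorem lt_of_sum_lt (hx : EqualizesMarginals D g x m) (hg : ∀ i, AntitoneOn (g i) D)
    (hy : ∀ i, y i ∈ D) (hsum : ∑ i, x i < ∑ i, y i) (hb : ∀ i, b < g i (y i)) : b < m := by
  obtain ⟨i, -, hi⟩ := Finset.exists_lt_of_sum_lt hsum
  calc
    b < g i (y i) := hb i
    _ ≤ g i (x i) := hg i (hx.mem i) (hy i) hi.le
    _ = m := hx.apply_eq i

end Pointwise

variable {Q ι α β : Type*} [TopologicalSpace Q] [LinearOrder α] [TopologicalSpace α]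
  [OrderTopology α] [LinearOrder β] [TopologicalSpace β] [OrderTopology β] {W : Set Q}
  {D : Set α} {g : ι → Q → α → β} {x : ι → Q → α} {m : Q → β}

section Multiplier

variable [Fintype ι] [Nonempty ι] [AddCommMonoid α] [IsOrderedCancelAddMonoid α]
  [DenselyOrdered α]

theorem lowerSemicontinuousOn_multiplier [NoMaxOrder α] (hD : IsOpen D)
    (hg : ∀ i, ContinuousOn (fun p : Q × α => g i p.1 p.2) (W ×ˢ D))
    (hanti : ∀ i, ∀ q ∈ W, AntitoneOn (g i q) D)
    (hx : ∀ q ∈ W, EqualizesMarginals D (fun i => g i q) (fun i => x i q) (m q))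
    (hsum : ContinuousOn (fun q => ∑ i, x i q) W) : LowerSemicontinuousOn m W := by
  intro q hq b hb
  have henlarge : ∀ i, ∃ d, (b < g i q d ∧ d ∈ D) ∧ x i q < d := fun i => by
    have hxD := hD.mem_nhds ((hx q hq).mem i)
    have hgi : ContinuousAt (g i q) (x i q) := ((hg i).uncurry_left q hq).continuousAt hxD
    rw [← (hx q hq).apply_eq i] at hb
    exact (((hgi.eventually_const_lt hb).and hxD).filter_mono nhdsWithin_le_nhds
      |>.and self_mem_nhdsWithin).exists (f := 𝓝[>] x i q)
  choose y hy hxy using henlarge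
  have hlt : ∑ i, x i q < ∑ i, y i :=
    Finset.sum_lt_sum_of_nonempty Finset.univ_nonempty fun i _ => hxy i
  have hby : ∀ᶠ r in 𝓝[W] q, ∀ i, b < g i r (y i) := eventually_all.2 fun i =>
    ((hg i).uncurry_right (y i) (hy i).2 q hq).eventually_const_lt (hy i).1
  filter_upwards [hby, (hsum q hq).eventually_lt_const hlt, self_mem_nhdsWithin] with r hbr hlt hr
  exact (hx r hr).lt_of_sum_lt (fun i => hanti i r hr) (fun i => (hy i).2) hlt hbr

theorem continuousOn_multiplier [NoMaxOrder α] [NoMinOrder α] (hD : IsOpen D)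
    (hg : ∀ i, ContinuousOn (fun p : Q × α => g i p.1 p.2) (W ×ˢ D))
    (hanti : ∀ i, ∀ q ∈ W, AntitoneOn (g i q) D)
    (hx : ∀ q ∈ W, EqualizesMarginals D (fun i => g i q) (fun i => x i q) (m q))
    (hsum : ContinuousOn (fun q => ∑ i, x i q) W) : ContinuousOn m W :=
  continuousOn_iff_lower_upperSemicontinuousOn.2
    ⟨lowerSemicontinuousOn_multiplier hD hg hanti hx hsum,
      lowerSemicontinuousOn_multiplier (α := αᵒᵈ) (β := βᵒᵈ) hD hg
        (fun i q hq => (hanti i q hq).dual) (fun q hq => ⟨(hx q hq).mem, (hx q hq).apply_eq⟩) hsum⟩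

theorem continuousOn [NoMaxOrder α] [NoMinOrder α] (hD : IsOpen D)
    (hg : ∀ i, ContinuousOn (fun p : Q × α => g i p.1 p.2) (W ×ˢ D))
    (hanti : ∀ i, ∀ q ∈ W, StrictAntiOn (g i q) D)
    (hx : ∀ q ∈ W, EqualizesMarginals D (fun i => g i q) (fun i => x i q) (m q))
    (hsum : ContinuousOn (fun q => ∑ i, x i q) W) :
    (∀ i, ContinuousOn (x i) W) ∧ ContinuousOn m W := by
  have hm : ContinuousOn m W :=
    continuousOn_multiplier hD hg (fun i q hq => (hanti i q hq).antitoneOn) hx hsum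
  refine ⟨fun i => continuousOn_of_strictAntiOn hD (fun d hd => (hg i).uncurry_right d hd)
    (hanti i) (fun q hq => (hx q hq).mem i) ?_, hm⟩
  exact hm.congr fun q hq => (hx q hq).apply_eq i

end Multiplier

end EqualizesMarginals

theorem planner_solution_continuous_general {Θ ι : Type*} [TopologicalSpace Θ] [Fintype ι]
    {S : Set Θ} {lam : ι → ℝ} (hlam : ∀ i, 0 < lam i) {u u' : ι → Θ → ℝ → ℝ}
    (hu_cont : ∀ i, ContinuousOn (fun p : Θ × ℝ => u i p.1 p.2) (S ×ˢ Ioi 0))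
    (hu_conc : ∀ i, ∀ t ∈ S, StrictConcaveOn ℝ (Ioi 0) (u i t))
    (hu' : ∀ i, ∀ t ∈ S, ∀ c ∈ Ioi (0 : ℝ), HasDerivAt (u i t) (u' i t c) c)
    {xsol : ι → Θ → ℝ → ℝ} {musol : Θ → ℝ → ℝ}
    (hx_pos : ∀ i, ∀ t ∈ S, ∀ x ∈ Ioi (0 : ℝ), 0 < xsol i t x)
    (hx_sum : ∀ t ∈ S, ∀ x ∈ Ioi (0 : ℝ), ∑ i, xsol i t x = x)
    (hFOC : ∀ i, ∀ t ∈ S, ∀ x ∈ Ioi (0 : ℝ), lam i * u' i t (xsol i t x) = musol t x) :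
    (∀ i, ContinuousOn (fun p : Θ × ℝ => xsol i p.1 p.2) (S ×ˢ Ioi 0)) ∧
      ContinuousOn (fun p : Θ × ℝ => musol p.1 p.2) (S ×ˢ Ioi 0) := by
  rcases (S ×ˢ Ioi (0 : ℝ)).eq_empty_or_nonempty with hempty | ⟨p, hp⟩
  · simp [hempty]
  have : Nonempty ι := by
    by_contra! hι
    simpa using hp.2.trans_eq (hx_sum p.1 hp.1 p.2 hp.2).symm
  have hanti : ∀ i, ∀ q ∈ S ×ˢ Ioi (0 : ℝ), StrictAntiOn (fun c => lam i * u' i q.1 c) (Ioi 0) :=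
    fun i q hq => (strictMono_mul_left_of_pos (hlam i)).comp_strictAntiOn
      (strictAntiOn_of_strictConcaveOn_of_hasDerivAt (hu_conc i q.1 hq.1) (hu' i q.1 hq.1))
  have hcont : ∀ i, ContinuousOn (fun r : (Θ × ℝ) × ℝ => lam i * u' i r.1.1 r.2)
      ((S ×ˢ Ioi 0) ×ˢ Ioi 0) := fun i =>
    continuousOn_const.mul <| (continuousOn_deriv_of_concaveOn isOpen_Ioi (hu_cont i)
      (fun t ht => (hu_conc i t ht).concaveOn) (hu' i)).comp
        (f := fun r : (Θ × ℝ) × ℝ => (r.1.1, r.2)) (by fun_prop) fun r hr => ⟨hr.1.1, hr.2⟩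
  exact EqualizesMarginals.continuousOn (g := fun i q c => lam i * u' i q.1 c) isOpen_Ioi hcont
    hanti
    (fun q hq => ⟨fun i => hx_pos i q.1 hq.1 q.2 hq.2, fun i => hFOC i q.1 hq.1 q.2 hq.2⟩)
    (continuousOn_snd.congr fun q hq => hx_sum q.1 hq.1 q.2 hq.2)

/-- Continuity of the planner's solution functions (Proposition 2.1 of Dana (1993)):
the functions `x^i : [0,T] × (0,∞) → (0,∞)` and `μ : [0,T] × (0,∞) → (0,∞)`,
defined by letting `(x^1(t,x),…,x^I(t,x))` be the unique maximizer of the pointwise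
social planner problem at `(t,x)` and `μ(t,x)` the associated Lagrange multiplier
(so that `λ^i ∂u^i/∂c(t, x^i(t,x)) = μ(t,x)` for all `i` and `∑ x^i(t,x) = x`),
are continuous on `[0,T] × (0,∞)`. -/
theorem planner_solution_continuous
    (T : ℝ) (hT : 0 < T)
    (I : ℕ) (hI : 1 ≤ I)
    (lam : Fin I → ℝ) (hlam : ∀ i, 0 < lam i)
    (u u' u'' : Fin I → ℝ → ℝ → ℝ)
    (hu_cont : ∀ i, ContinuousOn (fun p : ℝ × ℝ => u i p.1 p.2) (Icc 0 T ×ˢ Ici 0))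
    (hu' : ∀ i, ∀ t ∈ Icc (0:ℝ) T, ∀ c ∈ Ioi (0:ℝ), HasDerivAt (u i t) (u' i t c) c)
    (hu'' : ∀ i, ∀ t ∈ Icc (0:ℝ) T, ∀ c ∈ Ioi (0:ℝ), HasDerivAt (u' i t) (u'' i t c) c)
    (hu''_cont : ∀ i, ∀ t ∈ Icc (0:ℝ) T, ContinuousOn (u'' i t) (Ioi 0))
    (hu'_pos : ∀ i, ∀ t ∈ Icc (0:ℝ) T, ∀ c ∈ Ioi (0:ℝ), 0 < u' i t c)
    (hu''_neg : ∀ i, ∀ t ∈ Icc (0:ℝ) T, ∀ c ∈ Ioi (0:ℝ), u'' i t c < 0)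
    (hInada0 : ∀ i, ∀ M : ℝ, ∃ δ > (0:ℝ), ∀ t ∈ Icc (0:ℝ) T, ∀ c ∈ Ioo (0:ℝ) δ,
      M ≤ u' i t c)
    (hInadaInf : ∀ i, ∀ ε > (0:ℝ), ∃ N : ℝ, ∀ t ∈ Icc (0:ℝ) T, ∀ c ∈ Ici N,
      u' i t c ≤ ε)
    -- the planner's solution functions
    (xsol : Fin I → ℝ → ℝ → ℝ) (musol : ℝ → ℝ → ℝ)
    -- `(xsol i t x)_i` is feasible and interior, with Lagrange multiplier `musol t x`
    (hx_pos : ∀ i, ∀ t ∈ Icc (0:ℝ) T, ∀ x ∈ Ioi (0:ℝ), 0 < xsol i t x)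
    (hx_sum : ∀ t ∈ Icc (0:ℝ) T, ∀ x ∈ Ioi (0:ℝ), (∑ i, xsol i t x) = x)
    (hmu_pos : ∀ t ∈ Icc (0:ℝ) T, ∀ x ∈ Ioi (0:ℝ), 0 < musol t x)
    (hFOC : ∀ i, ∀ t ∈ Icc (0:ℝ) T, ∀ x ∈ Ioi (0:ℝ),
      lam i * u' i t (xsol i t x) = musol t x)
    -- `(xsol i t x)_i` is the (unique) maximizer of the pointwise planner problem
    (hmax : ∀ t ∈ Icc (0:ℝ) T, ∀ x ∈ Ioi (0:ℝ),
      ∀ z : Fin I → ℝ, (∀ i, 0 ≤ z i) → (∑ i, z i) = x →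
        (∑ i, lam i * u i t (z i)) ≤ ∑ i, lam i * u i t (xsol i t x)) :
    (∀ i, ContinuousOn (fun p : ℝ × ℝ => xsol i p.1 p.2) (Icc 0 T ×ˢ Ioi 0)) ∧
    ContinuousOn (fun p : ℝ × ℝ => musol p.1 p.2) (Icc 0 T ×ˢ Ioi 0) :=
  planner_solution_continuous_general hlam
    (fun i => (hu_cont i).mono (prod_mono_right Ioi_subset_Ici_self))
    (fun i t ht => strictConcaveOn_of_hasDerivAt2_neg (convex_Ioi 0) isOpen_Ioi
      (hu' i t ht) (hu'' i t ht) (hu''_neg i t ht))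
    hu' hx_pos hx_sum hFOC
end

section
/- Real-analyticity of the planner's solution functions: if in addition each u^i is real-analytic on (0,T) × (0,∞) (as a function of the two real variables (t,c) jointly), then the functions x^i : [0,T] × (0,∞) → (0,∞), i = 1,…,I, and μ : [0,T] × (0,∞) → (0,∞), defined by the first-order conditions λ^i ∂u^i/∂c(t, x^i(t,x)) = μ(t,x) for all i and Σ_{i=1}^I x^i(t,x) = x, are real-analytic on the open set (0,T) × (0,∞). -/
open Set

/-!
For positive weights the first-order conditions `v i t (y i) = m`, `∑ i, y i = x`, with
`v i = lam i * u' i`, form a square system in `(y, m)`. Its Jacobian is the bordered Hessian of the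
planner's Lagrangian, which is injective because `v i` has negative slope `a i`: a kernel vector
`(η, κ)` satisfies `η i = κ / a i` and `∑ i, η i = 0`, so `κ * ∑ i, 1 / a i = 0`. The implicit
function theorem thus yields an analytic branch of solutions. As the `v i` are strictly decreasing,
the system has at most one solution, so the branch is the planner's solution.
-/

open Filter Topology ContDiff

section PartialDerivative

variable {𝕜 E F : Type*} [NontriviallyNormedField 𝕜]
  [NormedAddCommGroup E] [NormedSpace 𝕜 E] [NormedAddCommGroup F] [NormedSpace 𝕜 F]

theorem fderiv_apply_zero_one_eq_of_hasDerivAt {f : E → 𝕜 → F} {f' : F} {p : E × 𝕜}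
    (hf : DifferentiableAt 𝕜 (fun q : E × 𝕜 ↦ f q.1 q.2) p) (hf' : HasDerivAt (f p.1) f' p.2) :
    fderiv 𝕜 (fun q : E × 𝕜 ↦ f q.1 q.2) p (0, 1) = f' :=
  (hf.hasFDerivAt.comp_hasDerivAt_of_eq p.2
    ((hasDerivAt_const p.2 p.1).prodMk (hasDerivAt_id p.2)) rfl).unique hf'

theorem analyticOnNhd_of_hasDerivAt_snd {f f' : E → 𝕜 → F} {s : Set (E × 𝕜)} (hs : IsOpen s)
    (hf : AnalyticOnNhd 𝕜 (fun p : E × 𝕜 ↦ f p.1 p.2) s)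
    (hf' : ∀ p ∈ s, HasDerivAt (f p.1) (f' p.1 p.2) p.2) :
    AnalyticOnNhd 𝕜 (fun p : E × 𝕜 ↦ f' p.1 p.2) s :=
  (((ContinuousLinearMap.apply 𝕜 F ((0 : E), (1 : 𝕜))).analyticOnNhd univ).comp
    (hf.fderiv_of_isOpen hs) (mapsTo_univ _ _)).congr hs fun p hp ↦
      fderiv_apply_zero_one_eq_of_hasDerivAt (hf p hp).differentiableAt (hf' p hp)

end PartialDerivative

section Uniqueness

variable {ι α β : Type*} [Fintype ι] [Nonempty ι] [AddCommMonoid α] [LinearOrder α]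
  [IsOrderedCancelAddMonoid α] [LinearOrder β] {S : ι → Set α} {f : ι → α → β}
  {y z : ι → α} {m k : β}

theorem le_of_sum_le_sum_of_strictAntiOn (hf : ∀ i, StrictAntiOn (f i) (S i))
    (hy : ∀ i, y i ∈ S i) (hz : ∀ i, z i ∈ S i) (hfy : ∀ i, f i (y i) = m)
    (hfz : ∀ i, f i (z i) = k) (hle : ∑ i, z i ≤ ∑ i, y i) : m ≤ k := by
  by_contra! hkm
  have hyz (i : ι) : y i < z i :=
    ((hf i).lt_iff_gt (hz i) (hy i)).1 (by rwa [hfy i, hfz i])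
  exact hle.not_gt (Finset.sum_lt_sum_of_nonempty Finset.univ_nonempty fun i _ ↦ hyz i)

theorem eq_of_sum_eq_sum_of_strictAntiOn (hf : ∀ i, StrictAntiOn (f i) (S i))
    (hy : ∀ i, y i ∈ S i) (hz : ∀ i, z i ∈ S i) (hfy : ∀ i, f i (y i) = m)
    (hfz : ∀ i, f i (z i) = k) (hsum : ∑ i, y i = ∑ i, z i) : (y, m) = (z, k) := by
  have hmk : m = k :=
    (le_of_sum_le_sum_of_strictAntiOn hf hy hz hfy hfz hsum.ge).antisymm
      (le_of_sum_le_sum_of_strictAntiOn hf hz hy hfz hfy hsum.le)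
  have hyz : y = z := funext fun i ↦
    (hf i).injOn (hy i) (hz i) (by rw [hfy i, hfz i, hmk])
  rw [hyz, hmk]

end Uniqueness

section FirstOrderSystem

variable {𝕜 E ι : Type*} [NontriviallyNormedField 𝕜] [Fintype ι]

/-- The bordered Hessian `(η, κ) ↦ ((a i * η i - κ)ᵢ, ∑ i, η i)` of the planner's Lagrangian, where
`a i` is the second derivative of the `i`-th weighted utility. It is the Jacobian of the first-order
conditions in the allocation and the multiplier. -/
noncomputable def borderedHessian (a : ι → 𝕜) : (ι → 𝕜) × 𝕜 →L[𝕜] (ι → 𝕜) × 𝕜 :=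
  (ContinuousLinearMap.pi fun i ↦
    a i • .proj i ∘L .fst 𝕜 (ι → 𝕜) 𝕜 - .snd 𝕜 (ι → 𝕜) 𝕜).prod
    (∑ i, .proj i ∘L .fst 𝕜 (ι → 𝕜) 𝕜)

theorem borderedHessian_apply (a : ι → 𝕜) (w : (ι → 𝕜) × 𝕜) :
    borderedHessian a w = (fun i ↦ a i * w.1 i - w.2, ∑ i, w.1 i) := by
  simp [borderedHessian]

theorem injective_borderedHessian {a : ι → 𝕜} (ha : ∀ i, a i ≠ 0) (hsum : ∑ i, (a i)⁻¹ ≠ 0) :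
    Function.Injective (borderedHessian a) := by
  refine (injective_iff_map_eq_zero _).2 fun ⟨η, κ⟩ hw ↦ ?_
  simp only [borderedHessian_apply, Prod.mk_eq_zero, funext_iff, Pi.zero_apply, sub_eq_zero] at hw
  have hη (i : ι) : η i = (a i)⁻¹ * κ := (eq_inv_mul_iff_mul_eq₀ (ha i)).2 (hw.1 i)
  have hκ : κ = 0 := by
    have hprod : (∑ i, (a i)⁻¹) * κ = 0 := by simpa only [hη, ← Finset.sum_mul] using hw.2
    exact (mul_eq_zero.1 hprod).resolve_left hsum
  simp [funext_iff, hη, hκ]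

theorem isInvertible_borderedHessian [CompleteSpace 𝕜] {a : ι → 𝕜} (ha : ∀ i, a i ≠ 0)
    (hsum : ∑ i, (a i)⁻¹ ≠ 0) : (borderedHessian a).IsInvertible :=
  ⟨(LinearEquiv.ofInjectiveEndo (borderedHessian a : (ι → 𝕜) × 𝕜 →ₗ[𝕜] (ι → 𝕜) × 𝕜)
    (injective_borderedHessian ha hsum)).toContinuousLinearEquiv, rfl⟩

/-- The residual of the first-order conditions `v i t (y i) = m`, `∑ i, y i = x` for weighted
marginal utilities `v`, with parameters `p = (t, x)` and unknowns `z = (y, m)`: allocation and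
multiplier. -/
def firstOrderResidual (v : ι → E → 𝕜 → 𝕜) (p : E × 𝕜) (z : (ι → 𝕜) × 𝕜) : (ι → 𝕜) × 𝕜 :=
  (fun i ↦ v i p.1 (z.1 i) - z.2, ∑ i, z.1 i - p.2)

theorem firstOrderResidual_eq_zero_iff {v : ι → E → 𝕜 → 𝕜} {p : E × 𝕜} {z : (ι → 𝕜) × 𝕜} :
    firstOrderResidual v p z = 0 ↔ (∀ i, v i p.1 (z.1 i) = z.2) ∧ ∑ i, z.1 i = p.2 := by
  simp [firstOrderResidual, funext_iff, sub_eq_zero]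

theorem hasFDerivAt_firstOrderResidual {v : ι → E → 𝕜 → 𝕜} {p : E × 𝕜} {z : (ι → 𝕜) × 𝕜}
    {a : ι → 𝕜} (hv : ∀ i, HasDerivAt (v i p.1) (a i) (z.1 i)) :
    HasFDerivAt (firstOrderResidual v p) (borderedHessian a) z := by
  have hcoord (i : ι) : HasFDerivAt (fun w : (ι → 𝕜) × 𝕜 ↦ w.1 i)
      (.proj i ∘L .fst 𝕜 (ι → 𝕜) 𝕜) z :=
    (ContinuousLinearMap.proj i ∘L .fst 𝕜 (ι → 𝕜) 𝕜).hasFDerivAt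
  exact (hasFDerivAt_pi.2 fun i ↦
    ((hv i).comp_hasFDerivAt z (hcoord i)).sub hasFDerivAt_snd).prodMk
      ((HasFDerivAt.fun_sum fun i _ ↦ hcoord i).sub_const p.2)

variable [NormedAddCommGroup E] [NormedSpace 𝕜 E] {v : ι → E → 𝕜 → 𝕜} {p : E × 𝕜}
  {z : (ι → 𝕜) × 𝕜} {n : ℕ∞ω}

theorem contDiffAt_firstOrderResidual
    (hv : ∀ i, ContDiffAt 𝕜 n (fun q : E × 𝕜 ↦ v i q.1 q.2) (p.1, z.1 i)) :
    ContDiffAt 𝕜 n (Function.uncurry (firstOrderResidual v)) (p, z) := by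
  have hcoord (i : ι) : ContDiffAt 𝕜 n (fun q : (E × 𝕜) × (ι → 𝕜) × 𝕜 ↦ q.2.1 i) (p, z) := by
    fun_prop
  have hmarginal (i : ι) :
      ContDiffAt 𝕜 n (fun q : (E × 𝕜) × (ι → 𝕜) × 𝕜 ↦ v i q.1.1 (q.2.1 i)) (p, z) :=
    ContDiffAt.comp (g := fun q : E × 𝕜 ↦ v i q.1 q.2) (p, z) (hv i)
      (contDiffAt_fst.fst.prodMk (hcoord i))
  exact (contDiffAt_pi.2 fun i ↦ (hmarginal i).sub contDiffAt_snd.snd).prodMk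
    ((ContDiffAt.sum fun i _ ↦ hcoord i).sub contDiffAt_fst.snd)

theorem fderiv_firstOrderResidual_comp_inr {a : ι → 𝕜}
    (hres : DifferentiableAt 𝕜 (Function.uncurry (firstOrderResidual v)) (p, z))
    (hv : ∀ i, HasDerivAt (v i p.1) (a i) (z.1 i)) :
    fderiv 𝕜 (Function.uncurry (firstOrderResidual v)) (p, z) ∘L .inr 𝕜 (E × 𝕜) ((ι → 𝕜) × 𝕜) =
      borderedHessian a :=
  (hres.hasFDerivAt.comp z (hasFDerivAt_prodMk_right p z)).unique
    (hasFDerivAt_firstOrderResidual hv)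

end FirstOrderSystem

section Solution

theorem exists_contDiffAt_firstOrderResidual_eq_zero {𝕜 E ι : Type*} [RCLike 𝕜]
    [NormedAddCommGroup E] [NormedSpace 𝕜 E] [CompleteSpace E] [Fintype ι]
    {v : ι → E → 𝕜 → 𝕜} {a : ι → 𝕜} {p : E × 𝕜} {z : (ι → 𝕜) × 𝕜} {n : ℕ∞ω} (hn : n ≠ 0)
    (hv : ∀ i, ContDiffAt 𝕜 n (fun q : E × 𝕜 ↦ v i q.1 q.2) (p.1, z.1 i))
    (hv' : ∀ i, HasDerivAt (v i p.1) (a i) (z.1 i)) (ha : ∀ i, a i ≠ 0)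
    (hsum : ∑ i, (a i)⁻¹ ≠ 0) (hz : firstOrderResidual v p z = 0) :
    ∃ ψ : E × 𝕜 → (ι → 𝕜) × 𝕜, ContDiffAt 𝕜 n ψ p ∧ ψ p = z ∧
      ∀ᶠ q in 𝓝 p, firstOrderResidual v q (ψ q) = 0 := by
  have hres := contDiffAt_firstOrderResidual hv
  have hinv : (fderiv 𝕜 (Function.uncurry (firstOrderResidual v)) (p, z) ∘L
      .inr 𝕜 (E × 𝕜) ((ι → 𝕜) × 𝕜)).IsInvertible := by
    rw [fderiv_firstOrderResidual_comp_inr (hres.differentiableAt hn) hv']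
    exact isInvertible_borderedHessian ha hsum
  exact ⟨hres.implicitFunction hn hinv, hres.contDiffAt_implicitFunction hn hinv,
    hres.implicitFunction_apply_self hn hinv,
    (hres.eventually_apply_implicitFunction hn hinv).mono fun _ hq ↦ hq.trans hz⟩

variable {E ι : Type*} [NormedAddCommGroup E] [NormedSpace ℝ E] [CompleteSpace E]
  [Fintype ι] [Nonempty ι]

theorem contDiffAt_of_firstOrderResidual_eq_zero {v : ι → E → ℝ → ℝ} {a : ι → ℝ}
    {S : ι → Set ℝ} {z : E × ℝ → (ι → ℝ) × ℝ} {p : E × ℝ} {n : ℕ∞ω} (hn : n ≠ 0)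
    (hv : ∀ i, ContDiffAt ℝ n (fun q : E × ℝ ↦ v i q.1 q.2) (p.1, (z p).1 i))
    (hv' : ∀ i, HasDerivAt (v i p.1) (a i) ((z p).1 i)) (ha : ∀ i, a i < 0)
    (hS : ∀ i, IsOpen (S i)) (hanti : ∀ᶠ q in 𝓝 p, ∀ i, StrictAntiOn (v i q.1) (S i))
    (hzS : ∀ᶠ q in 𝓝 p, ∀ i, (z q).1 i ∈ S i)
    (hz : ∀ᶠ q in 𝓝 p, firstOrderResidual v q (z q) = 0) :
    ContDiffAt ℝ n z p := by
  have hsum : ∑ i, (a i)⁻¹ < 0 :=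
    Finset.sum_neg (fun i _ ↦ inv_lt_zero.2 (ha i)) Finset.univ_nonempty
  obtain ⟨ψ, hψ, hψp, hψ_res⟩ := exists_contDiffAt_firstOrderResidual_eq_zero hn hv hv'
    (fun i ↦ (ha i).ne) hsum.ne hz.self_of_nhds
  have hψS : ∀ᶠ q in 𝓝 p, ∀ i, (ψ q).1 i ∈ S i := eventually_all.2 fun i ↦ by
    have hcont : ContinuousAt (fun q ↦ (ψ q).1 i) p :=
      continuousAt_pi.1 hψ.continuousAt.fst i
    exact hcont.eventually_mem ((hS i).mem_nhds (by rw [hψp]; exact hzS.self_of_nhds i))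
  refine hψ.congr_of_eventuallyEq ?_
  filter_upwards [hanti, hzS, hz, hψS, hψ_res] with q hq_anti hq_zS hq_z hq_ψS hq_ψ
  rw [firstOrderResidual_eq_zero_iff] at hq_z hq_ψ
  exact eq_of_sum_eq_sum_of_strictAntiOn hq_anti hq_zS hq_ψS hq_z.1 hq_ψ.1
    (hq_z.2.trans hq_ψ.2.symm)

theorem planner_solution_analytic_general {U : Set E} (hU : IsOpen U) {X : Set ℝ} (hX : IsOpen X)
    {S : ι → Set ℝ} (hS_open : ∀ i, IsOpen (S i)) (hS_convex : ∀ i, Convex ℝ (S i))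
    {lam : ι → ℝ} (hlam : ∀ i, 0 < lam i) {u u' u'' : ι → E → ℝ → ℝ}
    (hu : ∀ i, AnalyticOnNhd ℝ (fun p : E × ℝ ↦ u i p.1 p.2) (U ×ˢ S i))
    (hu' : ∀ i, ∀ t ∈ U, ∀ c ∈ S i, HasDerivAt (u i t) (u' i t c) c)
    (hu'' : ∀ i, ∀ t ∈ U, ∀ c ∈ S i, HasDerivAt (u' i t) (u'' i t c) c)
    (hu''_neg : ∀ i, ∀ t ∈ U, ∀ c ∈ S i, u'' i t c < 0)
    {xsol : ι → E → ℝ → ℝ} {musol : E → ℝ → ℝ}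
    (hx_mem : ∀ i, ∀ t ∈ U, ∀ x ∈ X, xsol i t x ∈ S i)
    (hx_sum : ∀ t ∈ U, ∀ x ∈ X, ∑ i, xsol i t x = x)
    (hFOC : ∀ i, ∀ t ∈ U, ∀ x ∈ X, lam i * u' i t (xsol i t x) = musol t x) :
    (∀ i, AnalyticOnNhd ℝ (fun p : E × ℝ ↦ xsol i p.1 p.2) (U ×ˢ X)) ∧
      AnalyticOnNhd ℝ (fun p : E × ℝ ↦ musol p.1 p.2) (U ×ˢ X) := by
  have hu'_analytic (i : ι) : AnalyticOnNhd ℝ (fun p : E × ℝ ↦ u' i p.1 p.2) (U ×ˢ S i) :=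
    analyticOnNhd_of_hasDerivAt_snd (hU.prod (hS_open i)) (hu i)
      fun p hp ↦ hu' i p.1 hp.1 p.2 hp.2
  have hv' (i : ι) (t : E) (ht : t ∈ U) (c : ℝ) (hc : c ∈ S i) :
      HasDerivAt (fun c ↦ lam i * u' i t c) (lam i * u'' i t c) c :=
    (hu'' i t ht c hc).const_mul (lam i)
  have hv'_neg (i : ι) (t : E) (ht : t ∈ U) (c : ℝ) (hc : c ∈ S i) : lam i * u'' i t c < 0 :=
    mul_neg_of_pos_of_neg (hlam i) (hu''_neg i t ht c hc)
  have hv_anti (i : ι) (t : E) (ht : t ∈ U) : StrictAntiOn (fun c ↦ lam i * u' i t c) (S i) :=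
    strictAntiOn_of_hasDerivWithinAt_neg (hS_convex i) (HasDerivAt.continuousOn (hv' i t ht))
      (fun c hc ↦ (hv' i t ht c (interior_subset hc)).hasDerivWithinAt)
      fun c hc ↦ hv'_neg i t ht c (interior_subset hc)
  have hz (p : E × ℝ) (hp : p ∈ U ×ˢ X) : AnalyticAt ℝ
      (fun q : E × ℝ ↦ ((fun i ↦ xsol i q.1 q.2, musol q.1 q.2) : (ι → ℝ) × ℝ)) p := by
    have hUX : ∀ᶠ q in 𝓝 p, q ∈ U ×ˢ X := (hU.prod hX).eventually_mem hp
    have hxS (i : ι) : xsol i p.1 p.2 ∈ S i := hx_mem i p.1 hp.1 p.2 hp.2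
    refine ContDiffAt.analyticAt (contDiffAt_of_firstOrderResidual_eq_zero (by simp)
      (v := fun i t c ↦ lam i * u' i t c)
      (fun i ↦ contDiffAt_const.mul (hu'_analytic i (p.1, xsol i p.1 p.2) ⟨hp.1, hxS i⟩).contDiffAt)
      (fun i ↦ hv' i p.1 hp.1 _ (hxS i)) (fun i ↦ hv'_neg i p.1 hp.1 _ (hxS i)) hS_open
      (hUX.mono fun q hq i ↦ hv_anti i q.1 hq.1)
      (hUX.mono fun q hq i ↦ hx_mem i q.1 hq.1 q.2 hq.2) (hUX.mono fun q hq ↦ ?_))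
    exact firstOrderResidual_eq_zero_iff.2
      ⟨fun i ↦ hFOC i q.1 hq.1 q.2 hq.2, hx_sum q.1 hq.1 q.2 hq.2⟩
  exact ⟨fun i p hp ↦ analyticAt_pi_iff.1 (analyticAt_fst.comp (hz p hp)) i,
    fun p hp ↦ analyticAt_snd.comp (hz p hp)⟩

end Solution

/-- Real-analyticity of the planner's solution functions: if in addition each `u^i`
is real-analytic on `(0,T) × (0,∞)` (jointly in `(t,c)`), then the solution
functions `x^i` and `μ` of the pointwise social planner problem
(characterized by `λ^i ∂u^i/∂c(t, x^i(t,x)) = μ(t,x)` and `∑ x^i(t,x) = x`)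
are real-analytic on the open set `(0,T) × (0,∞)`. -/
theorem planner_solution_analytic
    (T : ℝ) (hT : 0 < T)
    (I : ℕ) (hI : 1 ≤ I)
    (lam : Fin I → ℝ) (hlam : ∀ i, 0 < lam i)
    (u u' u'' : Fin I → ℝ → ℝ → ℝ)
    (hu_cont : ∀ i, ContinuousOn (fun p : ℝ × ℝ => u i p.1 p.2) (Icc 0 T ×ˢ Ici 0))
    -- real-analyticity of the utility functions on `(0,T) × (0,∞)`
    (hu_anal : ∀ i, AnalyticOnNhd ℝ (fun p : ℝ × ℝ => u i p.1 p.2) (Ioo 0 T ×ˢ Ioi 0))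
    (hu' : ∀ i, ∀ t ∈ Icc (0:ℝ) T, ∀ c ∈ Ioi (0:ℝ), HasDerivAt (u i t) (u' i t c) c)
    (hu'' : ∀ i, ∀ t ∈ Icc (0:ℝ) T, ∀ c ∈ Ioi (0:ℝ), HasDerivAt (u' i t) (u'' i t c) c)
    (hu''_cont : ∀ i, ∀ t ∈ Icc (0:ℝ) T, ContinuousOn (u'' i t) (Ioi 0))
    (hu'_pos : ∀ i, ∀ t ∈ Icc (0:ℝ) T, ∀ c ∈ Ioi (0:ℝ), 0 < u' i t c)
    (hu''_neg : ∀ i, ∀ t ∈ Icc (0:ℝ) T, ∀ c ∈ Ioi (0:ℝ), u'' i t c < 0)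
    (hInada0 : ∀ i, ∀ M : ℝ, ∃ δ > (0:ℝ), ∀ t ∈ Icc (0:ℝ) T, ∀ c ∈ Ioo (0:ℝ) δ,
      M ≤ u' i t c)
    (hInadaInf : ∀ i, ∀ ε > (0:ℝ), ∃ N : ℝ, ∀ t ∈ Icc (0:ℝ) T, ∀ c ∈ Ici N,
      u' i t c ≤ ε)
    -- the planner's solution functions, characterized by the first-order conditions
    (xsol : Fin I → ℝ → ℝ → ℝ) (musol : ℝ → ℝ → ℝ)
    (hx_pos : ∀ i, ∀ t ∈ Icc (0:ℝ) T, ∀ x ∈ Ioi (0:ℝ), 0 < xsol i t x)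
    (hx_sum : ∀ t ∈ Icc (0:ℝ) T, ∀ x ∈ Ioi (0:ℝ), (∑ i, xsol i t x) = x)
    (hmu_pos : ∀ t ∈ Icc (0:ℝ) T, ∀ x ∈ Ioi (0:ℝ), 0 < musol t x)
    (hFOC : ∀ i, ∀ t ∈ Icc (0:ℝ) T, ∀ x ∈ Ioi (0:ℝ),
      lam i * u' i t (xsol i t x) = musol t x)
    (hmax : ∀ t ∈ Icc (0:ℝ) T, ∀ x ∈ Ioi (0:ℝ),
      ∀ z : Fin I → ℝ, (∀ i, 0 ≤ z i) → (∑ i, z i) = x →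
        (∑ i, lam i * u i t (z i)) ≤ ∑ i, lam i * u i t (xsol i t x)) :
    (∀ i, AnalyticOnNhd ℝ (fun p : ℝ × ℝ => xsol i p.1 p.2) (Ioo 0 T ×ˢ Ioi 0)) ∧
    AnalyticOnNhd ℝ (fun p : ℝ × ℝ => musol p.1 p.2) (Ioo 0 T ×ˢ Ioi 0) := by
  have : Nonempty (Fin I) := ⟨⟨0, hI⟩⟩
  have hIcc {t : ℝ} (ht : t ∈ Ioo 0 T) : t ∈ Icc 0 T := Ioo_subset_Icc_self ht
  exact planner_solution_analytic_general isOpen_Ioo isOpen_Ioi (fun _ ↦ isOpen_Ioi)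
    (fun _ ↦ convex_Ioi 0) hlam hu_anal (fun i t ht ↦ hu' i t (hIcc ht))
    (fun i t ht ↦ hu'' i t (hIcc ht)) (fun i t ht ↦ hu''_neg i t (hIcc ht))
    (fun i t ht ↦ hx_pos i t (hIcc ht)) (fun t ht ↦ hx_sum t (hIcc ht))
    (fun i t ht ↦ hFOC i t (hIcc ht))
end

section
/- Core lemma for dynamic completeness (deterministic content of Theorem 4): let T > 0, K ≥ 1, and let r : [0,T] × ℝ^K → ℝ^K be continuous and real-analytic on (0,T) × ℝ^K, such that the spatial partial derivatives ∂r_k/∂x_l (k,l = 1,…,K) exist and are continuous on all of [0,T] × ℝ^K (so the spatial Jacobian matrix D_x r extends continuously to t = T). Let σ : ℝ^K → ℝ^{K×K} be real-analytic with σ(x) invertible for every x ∈ ℝ^K. If there exists a point x₀ ∈ ℝ^K with det D_x r(T, x₀) ≠ 0, then the set {(t,x) ∈ (0,T) × ℝ^K : det(D_x r(t,x) · σ(x)) = 0} has (K+1)-dimensional Lebesgue measure zero. -/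
open Set MeasureTheory

/-!
The determinant of the spatial Jacobian is real-analytic on the connected open set `(0, T) × ℝ^K`.
It is continuous up to `t = T` and nonzero at `(T, x₀)`, hence nonzero at an interior point. The
zeros of an analytic function that is not identically zero on a connected open set form a null set:
on a convex open set, the zeros on each line through a point where the function does not vanish are
isolated, and Fubini together with the scaling of Haar measure under homotheties turns this into a
statement about the whole zero set. The identity theorem reduces the general case to small balls.
-/

open AffineMap Filter Topology

section ZeroSet

variable {E F : Type*} [NormedAddCommGroup E] [NormedSpace ℝ E]
  [NormedAddCommGroup F] [NormedSpace ℝ F]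

lemma ae_lineMap_ne_zero_of_analyticOnNhd {f : E → F} {U : Set E} (hf : AnalyticOnNhd ℝ f U)
    (hU : IsOpen U) (hUc : Convex ℝ U) {p : E} (hp : p ∈ U) (hfp : f p ≠ 0) (q : E) :
    ∀ᵐ s : ℝ, lineMap p q s ∈ U → f (lineMap p q s) ≠ 0 := by
  have hline (s : ℝ) : AnalyticAt ℝ (fun s : ℝ => lineMap p q s) s := by
    simp only [lineMap_apply_module']
    fun_prop
  have hopen : IsOpen (lineMap p q ⁻¹' U : Set ℝ) :=
    hU.preimage (continuous_iff_continuousAt.2 fun s => (hline s).continuousAt)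
  have hconn : IsPreconnected (lineMap p q ⁻¹' U : Set ℝ) :=
    (hUc.affine_preimage (lineMap p q)).isPreconnected
  have hanalytic : AnalyticOnNhd ℝ (fun s : ℝ => f (lineMap p q s)) (lineMap p q ⁻¹' U) :=
    fun s hs => (hf _ hs).fun_comp (hline s)
  refine (ae_restrict_iff' hopen.measurableSet).1 <|
    ae_restrict_le_codiscreteWithin hopen.measurableSet <|
    (hanalytic.eqOn_zero_or_eventually_ne_zero_of_preconnected hconn).resolve_left fun hzero => ?_
  have h0 : (0 : ℝ) ∈ lineMap p q ⁻¹' U := by simpa using hp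
  exact hfp (by simpa using hzero h0)

variable [FiniteDimensional ℝ E] [MeasurableSpace E] [BorelSpace E]
  (μ : Measure E) [μ.IsAddHaarMeasure]

lemma measure_eq_zero_of_ae_lineMap_notMem {Z : Set E} (hZ : MeasurableSet Z) (p : E)
    (h : ∀ᵐ q ∂μ, ∀ᵐ s : ℝ, lineMap p q s ∉ Z) : μ Z = 0 := by
  have : ProperSpace E := FiniteDimensional.proper_real E
  have hcont : Continuous fun x : E × ℝ => lineMap p x.1 x.2 := by
    simp only [lineMap_apply_module']
    fun_prop
  have hmeas : MeasurableSet {x : E × ℝ | lineMap p x.1 x.2 ∉ Z} := hcont.measurable hZ.compl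
  rw [Measure.ae_ae_comm hmeas] at h
  obtain ⟨s, hs, hs0⟩ := (h.and (Measure.ae_ne volume (0 : ℝ))).exists
  -- `homothety p s q` and `lineMap p q s` are definitionally equal.
  have hpre : μ (homothety p s ⁻¹' Z) = 0 := measure_eq_zero_iff_ae_notMem.2 hs
  have hsurj : Function.Surjective (homothety p s) :=
    (AffineEquiv.homothetyUnitsMulHom p (Units.mk0 s hs0)).surjective
  rw [← image_preimage_eq Z hsurj, Measure.addHaar_image_homothety, hpre, mul_zero]

lemma measure_zeros_eq_zero_of_analyticOnNhd_of_convex {f : E → F} {U : Set E}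
    (hf : AnalyticOnNhd ℝ f U) (hU : IsOpen U) (hUc : Convex ℝ U)
    {p : E} (hp : p ∈ U) (hfp : f p ≠ 0) : μ {x ∈ U | f x = 0} = 0 := by
  have hmeas : MeasurableSet {x ∈ U | f x = 0} := by
    have hne : IsOpen (U ∩ f ⁻¹' {0}ᶜ) :=
      hf.continuousOn.isOpen_inter_preimage hU isOpen_compl_singleton
    convert hU.measurableSet.diff hne.measurableSet using 1
    ext x
    simp
  refine measure_eq_zero_of_ae_lineMap_notMem μ hmeas p (.of_forall fun q => ?_)
  filter_upwards [ae_lineMap_ne_zero_of_analyticOnNhd hf hU hUc hp hfp q] with s hs hmem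
  exact hs hmem.1 hmem.2

theorem measure_zeros_eq_zero_of_analyticOnNhd_of_isPreconnected {f : E → F} {U : Set E}
    (hf : AnalyticOnNhd ℝ f U) (hU : IsOpen U) (hUc : IsPreconnected U)
    {p : E} (hp : p ∈ U) (hfp : f p ≠ 0) : μ {x ∈ U | f x = 0} = 0 := by
  refine measure_null_of_locally_null _ fun x hx => ?_
  obtain ⟨ε, hε, hball⟩ := Metric.isOpen_iff.1 hU x hx.1
  have hne : ∃ q ∈ Metric.ball x ε, f q ≠ 0 := by
    by_contra! hzero
    have hev : f =ᶠ[𝓝 x] 0 := eventually_of_mem (Metric.ball_mem_nhds x hε) hzero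
    exact hfp (hf.eqOn_zero_of_preconnected_of_eventuallyEq_zero hUc hx.1 hev hp)
  obtain ⟨q, hq, hfq⟩ := hne
  have hnull : μ {y ∈ Metric.ball x ε | f y = 0} = 0 :=
    measure_zeros_eq_zero_of_analyticOnNhd_of_convex μ (hf.mono hball) Metric.isOpen_ball
      (convex_ball x ε) hq hfq
  refine ⟨{y ∈ U | f y = 0} ∩ Metric.ball x ε,
    inter_mem_nhdsWithin _ (Metric.ball_mem_nhds x hε),
    measure_mono_null ?_ hnull⟩
  exact fun y hy => ⟨hy.2, hy.1.2⟩

end ZeroSet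

section Jacobian

variable {𝕜 E F ι : Type*} [NontriviallyNormedField 𝕜] [NormedAddCommGroup E] [NormedSpace 𝕜 E]
  [NormedAddCommGroup F] [NormedSpace 𝕜 F] [DecidableEq ι]

lemma analyticOnNhd_of_hasLineDerivAt [CompleteSpace F] {f g : E → F} {U : Set E} {v : E}
    (hf : AnalyticOnNhd 𝕜 f U) (hU : IsOpen U) (hg : ∀ x ∈ U, HasLineDerivAt 𝕜 f (g x) x v) :
    AnalyticOnNhd 𝕜 g U := by
  have hfderiv : AnalyticOnNhd 𝕜 (fun x => fderiv 𝕜 f x v) U := fun x hx =>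
    ((ContinuousLinearMap.apply 𝕜 F v).analyticAt _).fun_comp (hf x hx).fderiv
  refine hfderiv.congr hU fun x hx => ?_
  exact ((hf x hx).differentiableAt.hasFDerivAt.hasLineDerivAt v).unique (hg x hx)

lemma hasLineDerivAt_single_of_hasDerivAt_update {f : (ι → 𝕜) → F} {f' : F} {x : ι → 𝕜} {i : ι}
    (h : HasDerivAt (fun s => f (Function.update x i s)) f' (x i)) :
    HasLineDerivAt 𝕜 f f' x (Pi.single i 1) := by
  have hupdate (s : 𝕜) : Function.update x i (x i + s) = x + s • Pi.single i 1 := by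
    ext j
    rcases eq_or_ne j i with rfl | hj <;> simp [*]
  have hshift := HasDerivAt.comp_const_add (x i) 0 ((add_zero (x i)).symm ▸ h)
  simpa only [HasLineDerivAt, hupdate] using hshift

lemma analyticOnNhd_matrix_det {A : Type*} [NormedCommRing A] [NormedAlgebra 𝕜 A] [Fintype ι]
    {M : E → Matrix ι ι A} {U : Set E} (hM : ∀ i j, AnalyticOnNhd 𝕜 (fun x => M x i j) U) :
    AnalyticOnNhd 𝕜 (fun x => (M x).det) U := by
  simp only [Matrix.det_apply']
  exact fun x hx => Finset.analyticAt_fun_sum _ fun τ _ =>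
    analyticAt_const.mul (Finset.analyticAt_fun_prod _ fun i _ => hM (τ i) i x hx)

lemma analyticOnNhd_det_of_partial_derivatives [CompleteSpace 𝕜] [Fintype ι]
    {r : E → (ι → 𝕜) → (ι → 𝕜)} {Dr : E → (ι → 𝕜) → Matrix ι ι 𝕜} {U : Set (E × (ι → 𝕜))}
    (hU : IsOpen U) (hr : AnalyticOnNhd 𝕜 (fun p : E × (ι → 𝕜) => r p.1 p.2) U)
    (hDr : ∀ p ∈ U, ∀ k l,
      HasDerivAt (fun s => r p.1 (Function.update p.2 l s) k) (Dr p.1 p.2 k l) (p.2 l)) :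
    AnalyticOnNhd 𝕜 (fun p : E × (ι → 𝕜) => (Dr p.1 p.2).det) U := by
  refine analyticOnNhd_matrix_det fun k l => ?_
  have hcomponent : AnalyticOnNhd 𝕜 (fun p : E × (ι → 𝕜) => r p.1 p.2 k) U :=
    analyticOnNhd_pi_iff.1 hr k
  refine analyticOnNhd_of_hasLineDerivAt (v := (0, Pi.single l 1)) hcomponent hU fun p hp => ?_
  have hline : HasLineDerivAt 𝕜 (fun x => r p.1 x k) (Dr p.1 p.2 k l) p.2 (Pi.single l 1) :=
    hasLineDerivAt_single_of_hasDerivAt_update (hDr p hp k l)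
  simpa [HasLineDerivAt] using hline

lemma eventually_det_ne_zero {X R : Type*} [CommRing R] [TopologicalSpace R] [IsTopologicalRing R]
    [T1Space R] [Fintype ι] {l : Filter X} {M : X → Matrix ι ι R} {M₀ : Matrix ι ι R}
    (hM : ∀ i j, Tendsto (fun x => M x i j) l (𝓝 (M₀ i j))) (hM₀ : M₀.det ≠ 0) :
    ∀ᶠ x in l, (M x).det ≠ 0 := by
  have htendsto : Tendsto M l (𝓝 M₀) :=
    tendsto_pi_nhds.2 fun i => tendsto_pi_nhds.2 fun j => hM i j
  exact ((continuous_id.matrix_det.tendsto M₀).comp htendsto).eventually_ne hM₀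

end Jacobian

theorem volatility_matrix_invertible_ae_general {ι : Type*} [Fintype ι] [DecidableEq ι]
    {a b : ℝ} (hab : a < b) {Ω : Set (ι → ℝ)} (hΩ : IsOpen Ω) (hΩc : IsPreconnected Ω)
    {r : ℝ → (ι → ℝ) → (ι → ℝ)} {Dr : ℝ → (ι → ℝ) → Matrix ι ι ℝ}
    {sigma : (ι → ℝ) → Matrix ι ι ℝ}
    (hr : AnalyticOnNhd ℝ (fun p : ℝ × (ι → ℝ) => r p.1 p.2) (Ioo a b ×ˢ Ω))
    (hDr : ∀ t ∈ Ioo a b, ∀ x ∈ Ω, ∀ k l,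
      HasDerivAt (fun s => r t (Function.update x l s) k) (Dr t x k l) (x l))
    (hsigma : ∀ x ∈ Ω, IsUnit (sigma x))
    {x₀ : ι → ℝ} (hx₀ : x₀ ∈ Ω)
    (hDr_cont : ∀ k l, ContinuousWithinAt (fun t => Dr t x₀ k l) (Ioo a b) b)
    (hdet : (Dr b x₀).det ≠ 0) :
    volume {p ∈ Ioo a b ×ˢ Ω | (Dr p.1 p.2 * sigma p.2).det = 0} = 0 := by
  have hU : IsOpen (Ioo a b ×ˢ Ω) := isOpen_Ioo.prod hΩ
  have hUc : IsPreconnected (Ioo a b ×ˢ Ω) := isPreconnected_Ioo.prod hΩc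
  have hanalytic : AnalyticOnNhd ℝ (fun p => (Dr p.1 p.2).det) (Ioo a b ×ˢ Ω) :=
    analyticOnNhd_det_of_partial_derivatives hU hr fun p hp => hDr p.1 hp.1 p.2 hp.2
  obtain ⟨t, hdet_t, ht⟩ : ∃ t, (Dr t x₀).det ≠ 0 ∧ t ∈ Ioo a b := by
    have : (𝓝[Ioo a b] b).NeBot := right_nhdsWithin_Ioo_neBot hab
    exact ((eventually_det_ne_zero hDr_cont hdet).and self_mem_nhdsWithin).exists
  have : (volume : Measure (ℝ × (ι → ℝ))).IsAddHaarMeasure :=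
    Measure.prod.instIsAddHaarMeasure _ _
  refine measure_mono_null ?_ <|
    measure_zeros_eq_zero_of_analyticOnNhd_of_isPreconnected volume hanalytic hU hUc
      (p := (t, x₀)) ⟨ht, hx₀⟩ hdet_t
  rintro p ⟨hp, hzero⟩
  rw [Matrix.det_mul] at hzero
  have hsigma_det : (sigma p.2).det ≠ 0 :=
    ((Matrix.isUnit_iff_isUnit_det _).1 (hsigma p.2 hp.2)).ne_zero
  exact ⟨hp, (mul_eq_zero.1 hzero).resolve_right hsigma_det⟩

/-- Core lemma for dynamic completeness (deterministic content of Theorem 4):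
let `r : [0,T] × ℝ^K → ℝ^K` be continuous, real-analytic on `(0,T) × ℝ^K`, with
spatial partial derivatives `∂r_k/∂x_l` existing and continuous on all of
`[0,T] × ℝ^K` (so the spatial Jacobian `Dr` extends continuously to `t = T`), and
let `σ : ℝ^K → ℝ^{K×K}` be real-analytic and pointwise invertible. If
`det Dr(T, x₀) ≠ 0` for some `x₀`, then the set of `(t,x) ∈ (0,T) × ℝ^K` where
`det (Dr(t,x) · σ(x)) = 0` has `(K+1)`-dimensional Lebesgue measure zero. -/
theorem volatility_matrix_invertible_ae
    (T : ℝ) (hT : 0 < T)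
    (K : ℕ) (hK : 1 ≤ K)
    (r : ℝ → (Fin K → ℝ) → (Fin K → ℝ))
    (Dr : ℝ → (Fin K → ℝ) → Matrix (Fin K) (Fin K) ℝ)
    (sigma : (Fin K → ℝ) → Matrix (Fin K) (Fin K) ℝ)
    -- `r` is continuous on `[0,T] × ℝ^K` and real-analytic on `(0,T) × ℝ^K`
    (hr_cont : ContinuousOn (fun p : ℝ × (Fin K → ℝ) => r p.1 p.2)
      (Icc 0 T ×ˢ (univ : Set (Fin K → ℝ))))
    (hr_anal : AnalyticOnNhd ℝ (fun p : ℝ × (Fin K → ℝ) => r p.1 p.2)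
      (Ioo 0 T ×ˢ (univ : Set (Fin K → ℝ))))
    -- `Dr t x k l = ∂r_k/∂x_l (t,x)` exists for all `t ∈ [0,T]`, `x ∈ ℝ^K`
    (hDr : ∀ t ∈ Icc (0:ℝ) T, ∀ (x : Fin K → ℝ) (k l : Fin K),
      HasDerivAt (fun s : ℝ => r t (Function.update x l s) k) (Dr t x k l) (x l))
    -- and is continuous on all of `[0,T] × ℝ^K`
    (hDr_cont : ∀ k l : Fin K,
      ContinuousOn (fun p : ℝ × (Fin K → ℝ) => Dr p.1 p.2 k l)
        (Icc 0 T ×ˢ (univ : Set (Fin K → ℝ))))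
    -- `σ` is real-analytic (entrywise) and everywhere invertible
    (hsigma_anal : ∀ k l : Fin K,
      AnalyticOnNhd ℝ (fun x : Fin K → ℝ => sigma x k l) (univ : Set (Fin K → ℝ)))
    (hsigma_inv : ∀ x : Fin K → ℝ, IsUnit (sigma x))
    -- nondegeneracy of the terminal Jacobian at some point
    (x₀ : Fin K → ℝ) (hx₀ : (Dr T x₀).det ≠ 0) :
    volume {p : ℝ × (Fin K → ℝ) | p.1 ∈ Ioo 0 T ∧ (Dr p.1 p.2 * sigma p.2).det = 0}
      = 0 := by
  have hDr_left (k l : Fin K) : ContinuousWithinAt (fun t => Dr t x₀ k l) (Ioo 0 T) T :=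
    ((hDr_cont k l).uncurry_right (f := fun t x => Dr t x k l) x₀ (mem_univ x₀) T
      (right_mem_Icc.2 hT.le)).mono Ioo_subset_Icc_self
  simpa using volatility_matrix_invertible_ae_general hT isOpen_univ isPreconnected_univ hr_anal
    (fun t ht x _ => hDr t (Ioo_subset_Icc_self ht) x) (fun x _ => hsigma_inv x) (mem_univ x₀)
    hDr_left hx₀
end

section
/- Osgood's theorem on separately holomorphic bounded functions (the result of Osgood (1899) invoked in the proof of Theorem 3): let U ⊆ ℂ^n be open and f : U → ℂ be locally bounded on U and separately holomorphic, i.e., for every point a ∈ U and every coordinate index j, the one-variable function z ↦ f(a_1,…,a_{j-1}, z, a_{j+1},…,a_n) is holomorphic on a neighborhood of a_j. Then f is holomorphic (jointly complex-analytic) on U. -/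
open Set Filter

/-!
Near a point `a`, a bounded separately holomorphic function is Lipschitz at `a`: moving one
coordinate at a time, each step is controlled by the Schwarz lemma. Hence `f` is continuous, and
iterating the one-variable Cauchy formula over the distinguished boundary of a polydisc is
legitimate. In the resulting formula
`(2πi)ⁿ f(w) = ∯ ∏ᵢ (zᵢ - wᵢ)⁻¹ f(z) dz` the kernel is an analytic function of `w` with values in
the Banach algebra of continuous functions on a compact space, inversion being analytic there, and
integration against a fixed density is a continuous linear map on that algebra. So `f` is a
composition of analytic maps.
-/

open Metric MeasureTheory Topology Function

open scoped Real

/-- `f` is holomorphic in each variable separately at every point of `s`. On an open set this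
agrees with requiring each slice to be holomorphic on a neighborhood of the coordinate. -/
def SeparatelyHolomorphicOn {ι F : Type*} [DecidableEq ι] [NormedAddCommGroup F] [NormedSpace ℂ F]
    (f : (ι → ℂ) → F) (s : Set (ι → ℂ)) : Prop :=
  ∀ z ∈ s, ∀ j, DifferentiableAt ℂ (fun x ↦ f (update z j x)) (z j)

namespace SeparatelyHolomorphicOn

variable {ι κ F : Type*} [DecidableEq ι] [DecidableEq κ] [NormedAddCommGroup F] [NormedSpace ℂ F]
  {f : (ι → ℂ) → F} {s t : Set (ι → ℂ)}

theorem mono (hf : SeparatelyHolomorphicOn f t) (hst : s ⊆ t) : SeparatelyHolomorphicOn f s :=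
  fun z hz ↦ hf z (hst hz)

theorem differentiableAt_update (hf : SeparatelyHolomorphicOn f s) {z : ι → ℂ} {j : ι} {x : ℂ}
    (hz : update z j x ∈ s) : DifferentiableAt ℂ (fun y ↦ f (update z j y)) x := by
  simpa only [update_idem, update_self] using hf _ hz j

theorem comp_equiv (hf : SeparatelyHolomorphicOn f s) (e : ι ≃ κ) :
    SeparatelyHolomorphicOn (fun z : κ → ℂ ↦ f (z ∘ e)) {z | z ∘ e ∈ s} := fun z hz k ↦ by
  simpa only [update_comp_equiv, comp_apply, e.apply_symm_apply] using hf _ hz (e.symm k)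

theorem comp_cons {n : ℕ} {f : (Fin (n + 1) → ℂ) → F} {s : Set (Fin (n + 1) → ℂ)}
    (hf : SeparatelyHolomorphicOn f s) (x : ℂ) :
    SeparatelyHolomorphicOn (fun y : Fin n → ℂ ↦ f (Fin.cons x y)) {y | Fin.cons x y ∈ s} :=
  fun y hy j ↦ by simpa only [Fin.cons_update, Fin.cons_succ] using hf _ hy j.succ

theorem differentiableAt_cons {n : ℕ} {f : (Fin (n + 1) → ℂ) → F} {s : Set (Fin (n + 1) → ℂ)}
    (hf : SeparatelyHolomorphicOn f s) {x : ℂ} {y : Fin n → ℂ} (h : Fin.cons x y ∈ s) :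
    DifferentiableAt ℂ (fun x ↦ f (Fin.cons x y)) x := by
  simpa only [Fin.update_cons_zero, Fin.cons_zero] using hf _ h 0

end SeparatelyHolomorphicOn

section Continuity

variable {ι : Type*} [Fintype ι] [DecidableEq ι]

theorem dist_le_sum_of_dist_piecewise_insert_le {X : ι → Type*} {Y : Type*} [PseudoMetricSpace Y]
    {f : (∀ i, X i) → Y} {w a : ∀ i, X i} {δ : ι → ℝ}
    (h : ∀ s : Finset ι, ∀ j ∉ s,
      dist (f ((insert j s).piecewise w a)) (f (s.piecewise w a)) ≤ δ j) :
    dist (f w) (f a) ≤ ∑ j, δ j := by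
  suffices ∀ s : Finset ι, dist (f (s.piecewise w a)) (f a) ≤ ∑ j ∈ s, δ j by
    simpa using this Finset.univ
  intro s
  induction s using Finset.induction_on with
  | empty => simp
  | insert j s hj ih =>
    rw [Finset.sum_insert hj]
    exact (dist_triangle _ _ _).trans (add_le_add (h s j hj) ih)

theorem update_mem_pi_ball {X : ι → Type*} [∀ i, PseudoMetricSpace (X i)] {a p : ∀ i, X i} {r : ℝ}
    {j : ι} {x : X j} (hp : p ∈ ball a r) (hx : x ∈ ball (a j) r) : update p j x ∈ ball a r := by
  rw [ball_pi _ (pos_of_mem_ball hx)] at hp ⊢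
  exact (update_mem_pi_iff_of_mem hp).2 fun _ ↦ hx

namespace SeparatelyHolomorphicOn

variable {F : Type*} [NormedAddCommGroup F] [NormedSpace ℂ F] {f : (ι → ℂ) → F}
  {a : ι → ℂ} {r C : ℝ}

theorem dist_update_le (hf : SeparatelyHolomorphicOn f (ball a r))
    (hC : ∀ z ∈ ball a r, ‖f z‖ ≤ C) {p : ι → ℂ} (hp : p ∈ ball a r) {j : ι} (hpj : p j = a j)
    {x : ℂ} (hx : x ∈ ball (a j) r) :
    dist (f (update p j x)) (f p) ≤ 2 * C / r * dist x (a j) := by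
  have hmaps : MapsTo (fun y ↦ f (update p j y)) (ball (a j) r)
      (closedBall (f (update p j (a j))) (2 * C)) := fun y hy ↦
    calc dist (f (update p j y)) (f (update p j (a j)))
      _ ≤ ‖f (update p j y)‖ + ‖f (update p j (a j))‖ := dist_le_norm_add_norm _ _
      _ ≤ C + C := add_le_add (hC _ (update_mem_pi_ball hp hy)) (hC _ (by simpa [← hpj] using hp))
      _ = 2 * C := (two_mul C).symm
  have hdiff : DifferentiableOn ℂ (fun y ↦ f (update p j y)) (ball (a j) r) := fun y hy ↦
    (hf.differentiableAt_update (update_mem_pi_ball hp hy)).differentiableWithinAt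
  simpa [← hpj] using Complex.dist_le_div_mul_dist_of_mapsTo_ball hdiff hmaps hx

theorem dist_le_of_norm_le (hf : SeparatelyHolomorphicOn f (ball a r))
    (hC : ∀ z ∈ ball a r, ‖f z‖ ≤ C) {w : ι → ℂ} (hw : w ∈ ball a r) :
    dist (f w) (f a) ≤ Fintype.card ι * (2 * C / r) * dist w a := by
  have hr : 0 < r := pos_of_mem_ball hw
  have hC₀ : 0 ≤ C := (norm_nonneg _).trans (hC w hw)
  have hmem (s : Finset ι) : s.piecewise w a ∈ ball a r := by
    rw [ball_pi _ hr] at hw ⊢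
    exact s.piecewise_mem_set_pi hw fun i _ ↦ mem_ball_self hr
  calc dist (f w) (f a)
    _ ≤ ∑ j, 2 * C / r * dist (w j) (a j) := by
      refine dist_le_sum_of_dist_piecewise_insert_le fun s j hj ↦ ?_
      rw [Finset.piecewise_insert]
      exact hf.dist_update_le hC (hmem s) (s.piecewise_eq_of_notMem _ _ hj)
        ((dist_le_pi_dist w a j).trans_lt hw)
    _ ≤ ∑ _j : ι, 2 * C / r * dist w a := by
      gcongr with j
      exact dist_le_pi_dist w a j
    _ = Fintype.card ι * (2 * C / r) * dist w a := by
      rw [Finset.sum_const, Finset.card_univ, nsmul_eq_mul, mul_assoc]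

end SeparatelyHolomorphicOn

end Continuity

theorem SeparatelyHolomorphicOn.continuousOn_of_locally_bounded {ι F : Type*} [Finite ι]
    [DecidableEq ι] [NormedAddCommGroup F] [NormedSpace ℂ F] {f : (ι → ℂ) → F} {U : Set (ι → ℂ)}
    (hf : SeparatelyHolomorphicOn f U) (hU : IsOpen U)
    (hbdd : ∀ a ∈ U, ∃ V ∈ 𝓝 a, ∃ C : ℝ, ∀ z ∈ V, ‖f z‖ ≤ C) : ContinuousOn f U := by
  cases nonempty_fintype ι
  intro a ha
  obtain ⟨V, hV, C, hC⟩ := hbdd a ha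
  obtain ⟨r, hr, hball⟩ := Metric.mem_nhds_iff.1 (inter_mem hV (hU.mem_nhds ha))
  refine (continuousAt_of_locally_lipschitz hr (Fintype.card ι * (2 * C / r))
    fun w hw ↦ ?_).continuousWithinAt
  exact (hf.mono fun z hz ↦ (hball hz).2).dist_le_of_norm_le (fun z hz ↦ hC z (hball hz).1) hw

/-- The Cauchy kernel `∏ᵢ (zᵢ - wᵢ)⁻¹` of a polydisc, without the constant `(2πi)⁻ⁿ`. -/
noncomputable def cauchyKernel {ι : Type*} [Fintype ι] (z w : ι → ℂ) : ℂ :=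
  ∏ i, (z i - w i)⁻¹

section CauchyFormula

variable {n : ℕ} {F : Type*} [NormedAddCommGroup F]
  {c w : Fin n → ℂ} {R : Fin n → ℝ} {f : (Fin n → ℂ) → F}

theorem cauchyKernel_cons (x : ℂ) (y : Fin n → ℂ) (w : Fin (n + 1) → ℂ) :
    cauchyKernel (Fin.cons x y) w = (x - w 0)⁻¹ * cauchyKernel y (Fin.tail w) := by
  simp only [cauchyKernel, Fin.prod_univ_succ, Fin.cons_zero, Fin.cons_succ, Fin.tail]

theorem continuous_torusMap (c : Fin n → ℂ) (R : Fin n → ℝ) : Continuous (torusMap c R) := by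
  unfold torusMap
  fun_prop

theorem torusMap_apply_mem_sphere (c : Fin n → ℂ) {R : Fin n → ℝ} (hR : ∀ i, 0 ≤ R i)
    (θ : Fin n → ℝ) (i : Fin n) : torusMap c R θ i ∈ sphere (c i) (R i) :=
  circleMap_mem_sphere (c i) (hR i) (θ i)

theorem torusMap_apply_ne (hw : w ∈ univ.pi fun i ↦ ball (c i) (R i)) (θ : Fin n → ℝ) (i : Fin n) :
    torusMap c R θ i ≠ w i :=
  circleMap_ne_mem_ball (hw i trivial) (θ i)

theorem torusIntegrable_of_continuousOn (hR : ∀ i, 0 ≤ R i)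
    (hf : ContinuousOn f (univ.pi fun i ↦ sphere (c i) (R i))) : TorusIntegrable f c R :=
  (hf.comp_continuous (continuous_torusMap c R) fun θ i _ ↦
    torusMap_apply_mem_sphere c hR θ i).continuousOn.integrableOn_compact isCompact_Icc

variable [NormedSpace ℂ F]

theorem continuousOn_cauchyKernel_smul (hf : ContinuousOn f (univ.pi fun i ↦ sphere (c i) (R i)))
    (hw : w ∈ univ.pi fun i ↦ ball (c i) (R i)) :
    ContinuousOn (fun z ↦ cauchyKernel z w • f z) (univ.pi fun i ↦ sphere (c i) (R i)) := by
  refine ContinuousOn.smul (continuousOn_finsetProd _ fun i _ ↦ ?_) hf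
  refine ContinuousOn.inv₀ (by fun_prop) fun z hz ↦ sub_ne_zero.2 fun h ↦ ?_
  exact sphere_disjoint_ball.ne_of_mem (hz i trivial) (hw i trivial) h

theorem SeparatelyHolomorphicOn.torusIntegral_cauchyKernel_smul [CompleteSpace F]
    (hf : SeparatelyHolomorphicOn f (univ.pi fun i ↦ closedBall (c i) (R i)))
    (hcont : ContinuousOn f (univ.pi fun i ↦ closedBall (c i) (R i)))
    (hw : w ∈ univ.pi fun i ↦ ball (c i) (R i)) :
    torusIntegral (fun z ↦ cauchyKernel z w • f z) c R = (2 * π * Complex.I) ^ n • f w := by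
  induction n with
  | zero => simp [cauchyKernel, Subsingleton.elim c w]
  | succ n ih =>
    have hR (i) : 0 ≤ R i := (pos_of_mem_ball (hw i trivial)).le
    have hw_tail : Fin.tail w ∈ univ.pi fun i : Fin n ↦ ball (c i.succ) (R i.succ) :=
      fun i _ ↦ hw i.succ trivial
    have cons_mem {x : ℂ} (hx : x ∈ closedBall (c 0) (R 0)) {y : Fin n → ℂ}
        (hy : y ∈ univ.pi fun i ↦ closedBall (c i.succ) (R i.succ)) :
        (Fin.cons x y : Fin (n + 1) → ℂ) ∈ univ.pi fun i ↦ closedBall (c i) (R i) :=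
      fun i _ ↦ Fin.cases hx (fun i ↦ hy i trivial) i
    have inner_integral (x) (hx : x ∈ sphere (c 0) (R 0)) :
        torusIntegral (fun y ↦ cauchyKernel (Fin.cons x y) w • f (Fin.cons x y))
          (c ∘ Fin.succ) (R ∘ Fin.succ) =
        (x - w 0)⁻¹ • (2 * π * Complex.I) ^ n • f (Fin.cons x (Fin.tail w)) := by
      have hx := sphere_subset_closedBall hx
      simp_rw [cauchyKernel_cons, mul_smul, torusIntegral_smul]
      congr 1
      exact ih ((hf.comp_cons x).mono fun y hy ↦ cons_mem hx hy)
        (hcont.comp (by fun_prop) fun y hy ↦ cons_mem hx hy) hw_tail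
    have hdiff : DifferentiableOn ℂ (fun x ↦ (2 * π * Complex.I) ^ n • f (Fin.cons x (Fin.tail w)))
        (closedBall (c 0) (R 0)) := fun x hx ↦
      ((hf.differentiableAt_cons (cons_mem hx fun i hi ↦
        ball_subset_closedBall (hw_tail i hi))).const_smul _).differentiableWithinAt
    rw [torusIntegral_succ (torusIntegrable_of_continuousOn hR (continuousOn_cauchyKernel_smul
        (hcont.mono (pi_mono fun i _ ↦ sphere_subset_closedBall)) hw)),
      circleIntegral.integral_congr (hR 0) inner_integral,
      hdiff.circleIntegral_sub_inv_smul (hw 0 trivial), Fin.cons_self_tail, smul_smul, ← pow_succ']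

end CauchyFormula

section AnalyticDependence

variable {X : Type*} [TopologicalSpace X]

theorem ringInverse_apply_of_forall_ne_zero {𝕜 : Type*} [NormedField 𝕜] [CompleteSpace 𝕜]
    {g : C(X, 𝕜)} (hg : ∀ x, g x ≠ 0) (x : X) : Ring.inverse g x = (g x)⁻¹ :=
  eq_inv_of_mul_eq_one_left <| DFunLike.congr_fun
    (Ring.inverse_mul_cancel g ((ContinuousMap.isUnit_iff_forall_ne_zero g).2 hg)) x

theorem prod_ringInverse_sub_apply {ι : Type*} [Fintype ι] {w : ι → ℂ} {ζ : ι → C(X, ℂ)}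
    (hw : ∀ x i, ζ i x ≠ w i) (x : X) :
    (∏ i, Ring.inverse (ζ i - algebraMap ℂ C(X, ℂ) (w i))) x = cauchyKernel (fun i ↦ ζ i x) w := by
  rw [ContinuousMap.prod_apply, cauchyKernel]
  refine Finset.prod_congr rfl fun i _ ↦ ?_
  exact ringInverse_apply_of_forall_ne_zero (fun x ↦ sub_ne_zero.2 (hw x i)) x

variable [CompactSpace X]

section integralSMulCLM

variable [MeasurableSpace X] [OpensMeasurableSpace X]
  {F : Type*} [NormedAddCommGroup F] [NormedSpace ℂ F] {μ : Measure X} {h : X → F}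

theorem integrable_continuousMap_smul (hh : Integrable h μ) (g : C(X, ℂ)) :
    Integrable (fun x ↦ g x • h x) μ :=
  hh.bdd_smul ‖g‖ g.continuous.aestronglyMeasurable (.of_forall g.norm_coe_le_norm)

/-- The continuous linear map `g ↦ ∫ x, g x • h x ∂μ` on continuous functions defined by an
integrable vector-valued density `h`. -/
noncomputable def integralSMulCLM (hh : Integrable h μ) : C(X, ℂ) →L[ℂ] F :=
  LinearMap.mkContinuous
    { toFun g := ∫ x, g x • h x ∂μ
      map_add' g₁ g₂ := by
        simp only [ContinuousMap.add_apply, add_smul]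
        exact integral_add (integrable_continuousMap_smul hh g₁)
          (integrable_continuousMap_smul hh g₂)
      map_smul' a g := by simp [mul_smul, integral_smul] }
    (∫ x, ‖h x‖ ∂μ) fun g ↦ by
      rw [← integral_mul_const]
      refine norm_integral_le_of_norm_le (hh.norm.mul_const _) (.of_forall fun x ↦ ?_)
      rw [norm_smul, mul_comm]
      gcongr
      exact g.norm_coe_le_norm x

theorem integralSMulCLM_apply (hh : Integrable h μ) (g : C(X, ℂ)) :
    integralSMulCLM hh g = ∫ x, g x • h x ∂μ := rfl

end integralSMulCLM

theorem isOpen_setOf_forall_apply_ne {ι : Type*} [Finite ι] (ζ : ι → C(X, ℂ)) :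
    IsOpen {w : ι → ℂ | ∀ x i, ζ i x ≠ w i} := by
  have setOf_eq_pi : {w : ι → ℂ | ∀ x i, ζ i x ≠ w i} = univ.pi fun i ↦ (range (ζ i))ᶜ := by
    ext w
    simp [forall_comm (α := X)]
  rw [setOf_eq_pi]
  exact isOpen_set_pi finite_univ fun i _ ↦ (isCompact_range (ζ i).continuous).isClosed.isOpen_compl

variable {ι : Type*} [Fintype ι] {w : ι → ℂ}

theorem analyticAt_prod_ringInverse_sub {ζ : ι → C(X, ℂ)} (hw : ∀ x i, ζ i x ≠ w i) :
    AnalyticAt ℂ (fun w ↦ ∏ i, Ring.inverse (ζ i - algebraMap ℂ C(X, ℂ) (w i))) w := by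
  refine Finset.analyticAt_fun_prod _ fun i _ ↦ ?_
  have hunit : IsUnit (ζ i - algebraMap ℂ C(X, ℂ) (w i)) :=
    (ContinuousMap.isUnit_iff_forall_ne_zero _).2 fun x ↦ sub_ne_zero.2 (by simpa using hw x i)
  have hsub : AnalyticAt ℂ (fun w : ι → ℂ ↦ ζ i - algebraMap ℂ C(X, ℂ) (w i)) w :=
    analyticAt_const.sub
      ((algebraMapCLM ℂ C(X, ℂ) ∘L ContinuousLinearMap.proj (φ := fun _ : ι ↦ ℂ) i).analyticAt w)
  exact (analyticAt_inverse (𝕜 := ℂ) hunit.unit).comp_of_eq hsub rfl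

theorem analyticAt_integral_cauchyKernel_smul [MeasurableSpace X] [OpensMeasurableSpace X]
    {F : Type*} [NormedAddCommGroup F] [NormedSpace ℂ F] {μ : Measure X} {h : X → F}
    (hh : Integrable h μ) {ζ : ι → C(X, ℂ)} (hw : ∀ x i, ζ i x ≠ w i) :
    AnalyticAt ℂ (fun w ↦ ∫ x, cauchyKernel (fun i ↦ ζ i x) w • h x ∂μ) w := by
  refine (((integralSMulCLM hh).analyticAt _).comp (analyticAt_prod_ringInverse_sub hw)).congr ?_
  filter_upwards [(isOpen_setOf_forall_apply_ne ζ).mem_nhds hw] with v hv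
  simp only [comp_apply, integralSMulCLM_apply, prod_ringInverse_sub_apply hv]

theorem analyticAt_torusIntegral_cauchyKernel_smul {n : ℕ} {F : Type*} [NormedAddCommGroup F]
    [NormedSpace ℂ F] {f : (Fin n → ℂ) → F} {c w : Fin n → ℂ} {R : Fin n → ℝ}
    (hf : TorusIntegrable f c R) (hw : ∀ θ i, torusMap c R θ i ≠ w i) :
    AnalyticAt ℂ (fun w ↦ torusIntegral (fun z ↦ cauchyKernel z w • f z) c R) w := by
  let ζ (i : Fin n) : C(Icc (0 : Fin n → ℝ) fun _ ↦ 2 * π, ℂ) :=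
    ⟨fun θ ↦ torusMap c R θ i,
      (continuous_apply i).comp ((continuous_torusMap c R).comp continuous_subtype_val)⟩
  have hdensity := (integrableOn_iff_comap_subtypeVal measurableSet_Icc).1 hf.function_integrable
  convert analyticAt_integral_cauchyKernel_smul hdensity (ζ := ζ) fun θ ↦ hw θ with v
  simp only [torusIntegral, ← integral_subtype_comap measurableSet_Icc]
  exact integral_congr_ae (.of_forall fun θ ↦ smul_comm _ _ _)

end AnalyticDependence

section Osgood

variable {F : Type*} [NormedAddCommGroup F] [NormedSpace ℂ F] [CompleteSpace F]

theorem SeparatelyHolomorphicOn.analyticAt_of_mem_polydisc {n : ℕ} {f : (Fin n → ℂ) → F}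
    {c w : Fin n → ℂ} {R : Fin n → ℝ}
    (hf : SeparatelyHolomorphicOn f (univ.pi fun i ↦ closedBall (c i) (R i)))
    (hcont : ContinuousOn f (univ.pi fun i ↦ closedBall (c i) (R i)))
    (hw : w ∈ univ.pi fun i ↦ ball (c i) (R i)) : AnalyticAt ℂ f w := by
  have hR (i) : 0 ≤ R i := (pos_of_mem_ball (hw i trivial)).le
  have hint : TorusIntegrable f c R :=
    torusIntegrable_of_continuousOn hR (hcont.mono (pi_mono fun i _ ↦ sphere_subset_closedBall))
  have hmem : (univ.pi fun i ↦ ball (c i) (R i)) ∈ 𝓝 w :=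
    (isOpen_set_pi finite_univ fun i _ ↦ isOpen_ball).mem_nhds hw
  refine ((analyticAt_torusIntegral_cauchyKernel_smul hint (torusMap_apply_ne hw)).const_smul
    (c := ((2 * π * Complex.I) ^ n)⁻¹)).congr ?_
  filter_upwards [hmem] with v hv
  rw [Pi.smul_apply, hf.torusIntegral_cauchyKernel_smul hcont hv,
    inv_smul_smul₀ (pow_ne_zero n Complex.two_pi_I_ne_zero)]

theorem SeparatelyHolomorphicOn.analyticOnNhd_of_continuousOn_fin {n : ℕ} {f : (Fin n → ℂ) → F}
    {U : Set (Fin n → ℂ)} (hf : SeparatelyHolomorphicOn f U) (hU : IsOpen U)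
    (hcont : ContinuousOn f U) : AnalyticOnNhd ℂ f U := by
  intro a ha
  obtain ⟨r, hr, hball⟩ := nhds_basis_closedBall.mem_iff.1 (hU.mem_nhds ha)
  rw [closedBall_pi a hr.le] at hball
  exact (hf.mono hball).analyticAt_of_mem_polydisc (hcont.mono hball) fun i _ ↦ mem_ball_self hr

variable {ι : Type*} [Fintype ι] [DecidableEq ι] {f : (ι → ℂ) → F} {U : Set (ι → ℂ)}

theorem SeparatelyHolomorphicOn.analyticOnNhd_of_continuousOn
    (hf : SeparatelyHolomorphicOn f U) (hU : IsOpen U) (hcont : ContinuousOn f U) :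
    AnalyticOnNhd ℂ f U := by
  let e := Fintype.equivFin ι
  let toFin := Pi.compRightL ℂ (fun _ : ι ↦ ℂ) e.symm
  let ofFin := Pi.compRightL ℂ (fun _ : Fin (Fintype.card ι) ↦ ℂ) e
  have ofFin_toFin (z) : ofFin (toFin z) = z := funext fun i ↦ congrArg z (e.symm_apply_apply i)
  have hfin : AnalyticOnNhd ℂ (f ∘ ofFin) (ofFin ⁻¹' U) :=
    (hf.comp_equiv e).analyticOnNhd_of_continuousOn_fin (hU.preimage ofFin.continuous)
      (hcont.comp ofFin.continuous.continuousOn (mapsTo_preimage _ _))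
  have hcomp := hfin.comp (toFin.analyticOnNhd U) fun z hz ↦ by
    rwa [mem_preimage, ofFin_toFin]
  simpa only [comp_def, ofFin_toFin] using hcomp

theorem osgood_separately_holomorphic_locally_bounded_general (hU : IsOpen U)
    (hbdd : ∀ a ∈ U, ∃ V ∈ 𝓝 a, ∃ C : ℝ, ∀ z ∈ V, ‖f z‖ ≤ C)
    (hsep : SeparatelyHolomorphicOn f U) : AnalyticOnNhd ℂ f U :=
  hsep.analyticOnNhd_of_continuousOn hU (hsep.continuousOn_of_locally_bounded hU hbdd)

end Osgood

/-- Osgood's theorem on separately holomorphic bounded functions (Osgood 1899):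
if `U ⊆ ℂ^n` is open and `f : U → ℂ` is locally bounded on `U` and separately
holomorphic — i.e., for every `a ∈ U` and every coordinate `j`, the one-variable
function `z ↦ f(a₁,…,a_{j-1}, z, a_{j+1},…,a_n)` is holomorphic on a neighborhood
of `a j` — then `f` is holomorphic (jointly complex-analytic) on `U`. -/
theorem osgood_separately_holomorphic_locally_bounded
    (n : ℕ) (U : Set (Fin n → ℂ)) (hU : IsOpen U)
    (f : (Fin n → ℂ) → ℂ)
    -- `f` is locally bounded on `U`
    (hbdd : ∀ a ∈ U, ∃ V ∈ nhds a, ∃ C : ℝ, ∀ z ∈ V, ‖f z‖ ≤ C)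
    -- `f` is separately holomorphic
    (hsep : ∀ a ∈ U, ∀ j : Fin n,
      ∀ᶠ z in nhds (a j), DifferentiableAt ℂ (fun w : ℂ => f (Function.update a j w)) z) :
    AnalyticOnNhd ℂ f U :=
  osgood_separately_holomorphic_locally_bounded_general hU hbdd
    fun a ha j ↦ (hsep a ha j).self_of_nhds
end
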